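/- Let b, c, d ∈ F_q[T] be distinct polynomials of degree at least one. There exist positive constants C_1, C_2 depending only on b, c and positive constants C_3, C_4 depending only on b, c, d with the following properties. For every integer n ≥ 1 and all polynomials a_1, …, a_{n−1} ∈ F_q[T] of degree at least one: (1) ξ := [0, a_1, …, a_{n−1}, c, \overline{b}] is quadratic over F_q(T) and C_1 |q_n|² ≤ H(ξ) ≤ C_2 |q_n|², where (p_k/q_k) are the convergents of ξ; (2) for every integer m ≥ 2, ζ := [0, a_1, …, a_{n−1}, c, \overline{b, …, b, d}] (the period block having length m, consisting of m−1 copies of b followed by d) is quadratic over F_q(T) and C_3 |q̃_n q̃_{n+m}| ≤ H(ζ) ≤ C_4 |q̃_n q̃_{n+m}|, where (p̃_k/q̃_k) are the convergents of ζ. -/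

import Mathlib

open Polynomial Filter
open scoped ENNReal

noncomputable section

namespace Ooto

variable (Fq : Type) [Field Fq] [Fintype Fq]

/-- `F_q((T⁻¹))`, realized as formal Laurent series in the variable `X = T⁻¹`. -/
abbrev K := LaurentSeries Fq

/-- The element `T = X⁻¹` of `F_q((T⁻¹))`. -/
def TT : K Fq := HahnSeries.single (-1 : ℤ) (1 : Fq)

/-- The natural embedding of `F_q[T]` into `F_q((T⁻¹))`, sending `T` to `T`. -/
def polyToK : Polynomial Fq →+* K Fq := Polynomial.eval₂RingHom HahnSeries.C (TT Fq)

open Classical in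
/-- The absolute value on `F_q((T⁻¹))`: `|0| = 0` and `|ξ| = q^{-N}` where `N` is the order
of `ξ` as a series in `T⁻¹`. -/
def kabs (f : K Fq) : ℝ := if f = 0 then 0 else (Fintype.card Fq : ℝ) ^ (-f.order)

/-- A fixed algebraic closure of `F_q((T⁻¹))`. -/
abbrev L := AlgebraicClosure (K Fq)

def toL : K Fq →+* L Fq := algebraMap (K Fq) (L Fq)

def φ : Polynomial Fq →+* L Fq := (toL Fq).comp (polyToK Fq)

/-- Evaluation of `P ∈ (F_q[T])[X]` at `ξ ∈ F_q((T⁻¹))`. -/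
def evalK (P : Polynomial (Polynomial Fq)) (ξ : K Fq) : K Fq :=
  Polynomial.eval₂ (polyToK Fq) ξ P

/-- Evaluation of `P ∈ (F_q[T])[X]` at a point of the algebraic closure. -/
def evalL (P : Polynomial (Polynomial Fq)) (α : L Fq) : L Fq :=
  Polynomial.eval₂ (φ Fq) α P

/-- Height of a polynomial over `F_q[T]`: the maximum of the absolute values of its
coefficients. -/
def Hpoly (P : Polynomial (Polynomial Fq)) : ℝ := ⨆ i : ℕ, kabs Fq (polyToK Fq (P.coeff i))

/-- `P` is the minimal polynomial of `α`: a non-constant irreducible primitive polynomial in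
`(F_q[T])[X]` whose leading coefficient is monic in `T`, vanishing at `α`. -/
def IsMinPolyOf (P : Polynomial (Polynomial Fq)) (α : L Fq) : Prop :=
  0 < P.natDegree ∧ Irreducible P ∧ P.IsPrimitive ∧ (P.leadingCoeff).Monic ∧ evalL Fq P α = 0

/-- `α` is algebraic over `F_q(T)`. -/
def IsAlgElem (α : L Fq) : Prop := ∃ P, IsMinPolyOf Fq P α

open Classical in
/-- The minimal polynomial of an algebraic element (junk value `0` otherwise). -/
def minPolyPrim (α : L Fq) : Polynomial (Polynomial Fq) :=
  if h : IsAlgElem Fq α then h.choose else 0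

/-- Degree of an algebraic element. -/
def degAlg (α : L Fq) : ℕ := (minPolyPrim Fq α).natDegree

/-- Height of an algebraic element. -/
def heightAlg (α : L Fq) : ℝ := Hpoly Fq (minPolyPrim Fq α)

/-- Inseparable degree of a polynomial `P ∈ (F_q[T])[X]`: the largest power `f = p^j` of the
characteristic such that `P(X) = R(X^f)` for some `R`. -/
def insepDeg (P : Polynomial (Polynomial Fq)) : ℕ :=
  (ringChar Fq) ^ sSup {j : ℕ | ∃ R : Polynomial (Polynomial Fq),
    P = R.comp (Polynomial.X ^ (ringChar Fq) ^ j)}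

/-- Inseparable degree of an algebraic element. -/
def insepAlg (α : L Fq) : ℕ := insepDeg Fq (minPolyPrim Fq α)

/-- `α'` is the Galois conjugate of the quadratic element `α` (equal to `α` itself in the
inseparable case): the minimal polynomial of `α` factors as `A(X - α)(X - α')`. -/
def IsConjOf (α' α : L Fq) : Prop :=
  (minPolyPrim Fq α).natDegree = 2 ∧
  (minPolyPrim Fq α).map (φ Fq) =
    Polynomial.C (φ Fq (minPolyPrim Fq α).leadingCoeff) *
      (Polynomial.X - Polynomial.C α) * (Polynomial.X - Polynomial.C α')

/-- `v` is an absolute value on the algebraic closure of `F_q((T⁻¹))` extending `kabs`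
(such an extension exists and is unique). -/
structure IsAbsExt (v : L Fq → ℝ) : Prop where
  eq_zero_iff : ∀ x, v x = 0 ↔ x = 0
  map_mul : ∀ x y, v (x * y) = v x * v y
  add_le : ∀ x y, v (x + y) ≤ max (v x) (v y)
  nonneg : ∀ x, 0 ≤ v x
  extends_kabs : ∀ f : K Fq, v (toL Fq f) = kabs Fq f

/-- The exponent `w_n(ξ)`: the supremum of the real numbers `w` such that
`0 < |P(ξ)| ≤ H(P)^{-w}` for infinitely many `P ∈ (F_q[T])[X]` of degree at most `n`. -/
def wExp (n : ℕ) (ξ : K Fq) : EReal :=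
  sSup {x : EReal | ∃ w : ℝ, x = (w : EReal) ∧
    {P : Polynomial (Polynomial Fq) | P.natDegree ≤ n ∧ 0 < kabs Fq (evalK Fq P ξ) ∧
      kabs Fq (evalK Fq P ξ) ≤ Hpoly Fq P ^ (-w)}.Infinite}

/-- The exponent `w_n^*(ξ)`: the supremum of the real numbers `w` such that
`0 < |ξ - α| ≤ H(α)^{-w-1}` for infinitely many algebraic `α` of degree at most `n`. -/
def wStarExp (v : L Fq → ℝ) (n : ℕ) (ξ : K Fq) : EReal :=
  sSup {x : EReal | ∃ w : ℝ, x = (w : EReal) ∧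
    {α : L Fq | IsAlgElem Fq α ∧ degAlg Fq α ≤ n ∧ 0 < v (toL Fq ξ - α) ∧
      v (toL Fq ξ - α) ≤ heightAlg Fq α ^ (-w - 1)}.Infinite}

/-- `pSeq a n = p_{n-1}`, the numerators of the convergents of `[a 0; a 1, a 2, …]`
(with `p_{-1} = 1`). -/
def pSeq (a : ℕ → Polynomial Fq) : ℕ → Polynomial Fq
  | 0 => 1
  | 1 => a 0
  | (n+2) => a (n+1) * pSeq a (n+1) + pSeq a n

/-- `qSeq a n = q_{n-1}`, the denominators of the convergents of `[a 0; a 1, a 2, …]`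
(with `q_{-1} = 0`). -/
def qSeq (a : ℕ → Polynomial Fq) : ℕ → Polynomial Fq
  | 0 => 0
  | 1 => 1
  | (n+2) => a (n+1) * qSeq a (n+1) + qSeq a n

/-- `ξ` has continued fraction expansion `[a 0; a 1, a 2, …]`: each partial quotient `a n`
(`n ≥ 1`) has degree at least one and `|ξ - p_n/q_n| = |q_n|⁻¹|q_{n+1}|⁻¹` for all `n ≥ 0`. -/
def IsCFOf (ξ : K Fq) (a : ℕ → Polynomial Fq) : Prop :=
  (∀ n, 1 ≤ n → 1 ≤ (a n).natDegree) ∧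
  ∀ n : ℕ,
    kabs Fq (ξ - polyToK Fq (pSeq Fq a (n+1)) / polyToK Fq (qSeq Fq a (n+1))) =
      (kabs Fq (polyToK Fq (qSeq Fq a (n+1))) * kabs Fq (polyToK Fq (qSeq Fq a (n+2))))⁻¹

/-- The sequence of partial quotients of `[0; b 0, b 1, b 2, …]`. -/
def cfA (b : ℕ → Polynomial Fq) : ℕ → Polynomial Fq := fun n => if n = 0 then 0 else b (n - 1)

/-- `qden b n` is the denominator `q_n` of the `n`-th convergent of `[0; b 0, b 1, …]`. -/
def qden (b : ℕ → Polynomial Fq) (n : ℕ) : Polynomial Fq := qSeq Fq (cfA Fq b) (n + 1)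

/-- `V^w` for a finite word `V` and a real `w ≥ 0`: `⌊w⌋` copies of `V` followed by the prefix
of `V` of length `⌈(w - ⌊w⌋)|V|⌉`. -/
def wordPow {A : Type*} (V : List A) (w : ℝ) : List A :=
  (List.replicate ⌊w⌋₊ V).flatten ++ V.take ⌈(w - ⌊w⌋₊) * V.length⌉₊

/-- The finite word `l` is a prefix of the infinite word `b`. -/
def IsPrefixOfSeq {A : Type*} (l : List A) (b : ℕ → A) : Prop :=
  ∀ (i : ℕ) (h : i < l.length), l.get ⟨i, h⟩ = b i

/-- Condition `(*)_ρ` for an infinite word. -/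
def SatisfiesCond {A : Type*} (b : ℕ → A) (ρ : ℝ) : Prop :=
  ∃ (U V : ℕ → List A) (w : ℕ → ℝ),
    (∀ n, V n ≠ []) ∧ (∀ n, 0 ≤ w n) ∧
    (∀ n, IsPrefixOfSeq (U n ++ wordPow (V n) (w n)) b) ∧
    (∀ n, ρ * (((U n).length + (V n).length : ℕ) : ℝ) ≤
      (((U n).length + (wordPow (V n) (w n)).length : ℕ) : ℝ)) ∧
    StrictMono fun n => (wordPow (V n) (w n)).length

/-- The Diophantine exponent of an infinite word: the supremum of the `ρ` such that the word
satisfies Condition `(*)_ρ`. -/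
def dioExp {A : Type*} (b : ℕ → A) : EReal :=
  sSup {x : EReal | ∃ ρ : ℝ, x = (ρ : EReal) ∧ SatisfiesCond b ρ}

/-- The complexity function: the number of distinct blocks of `n` consecutive letters. -/
def complexity {A : Type*} (b : ℕ → A) (n : ℕ) : ℕ∞ :=
  {w : Fin n → A | ∃ i : ℕ, ∀ k : Fin n, w k = b (i + k)}.encard

/-- The infinite word `b` is ultimately periodic. -/
def UltimatelyPeriodic {A : Type*} (b : ℕ → A) : Prop :=
  ∃ N T : ℕ, 0 < T ∧ ∀ n, N ≤ n → b (n + T) = b n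



section helpers

set_option linter.unusedSectionVars false

variable {Fq}

lemma kabs_zero : kabs Fq 0 = 0 := by simp [kabs]

lemma card_gt : (1 : ℝ) < (Fintype.card Fq : ℝ) := by
  exact_mod_cast Fintype.one_lt_card

lemma kabs_pos {x : K Fq} (hx : x ≠ 0) : 0 < kabs Fq x := by
  have := card_gt (Fq := Fq)
  simp only [kabs, hx, if_false]
  positivity

lemma kabs_nonneg (x : K Fq) : 0 ≤ kabs Fq x := by
  by_cases hx : x = 0
  · simp [hx, kabs_zero]
  · exact (kabs_pos hx).le

lemma kabs_eq_zero {x : K Fq} : kabs Fq x = 0 ↔ x = 0 :=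
  ⟨fun h => by_contra fun hx => (kabs_pos hx).ne' h, fun h => by simp [h, kabs_zero]⟩

lemma kabs_mul (x y : K Fq) : kabs Fq (x * y) = kabs Fq x * kabs Fq y := by
  by_cases hx : x = 0
  · simp [hx, kabs_zero]
  by_cases hy : y = 0
  · simp [hy, kabs_zero]
  have := card_gt (Fq := Fq)
  have h0 : (Fintype.card Fq : ℝ) ≠ 0 := by positivity
  simp only [kabs, hx, hy, mul_ne_zero hx hy, if_false]
  rw [HahnSeries.order_mul hx hy, neg_add, zpow_add₀ h0]

lemma kabs_neg (x : K Fq) : kabs Fq (-x) = kabs Fq x := by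
  by_cases hx : x = 0
  · simp [hx]
  · have hx' : -x ≠ 0 := neg_ne_zero.2 hx
    rw [kabs, kabs, if_neg hx, if_neg hx', HahnSeries.order_neg]

lemma kabs_add (x y : K Fq) : kabs Fq (x + y) ≤ max (kabs Fq x) (kabs Fq y) := by
  by_cases hx : x = 0
  · simp [hx]
  by_cases hy : y = 0
  · simp [hy]
  by_cases hxy : x + y = 0
  · rw [hxy, kabs_zero]; exact le_max_of_le_left (kabs_nonneg x)
  have h := HahnSeries.min_order_le_order_add hxy
  have := card_gt (Fq := Fq)
  simp only [kabs, hx, hy, hxy, if_false]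
  rcases min_le_iff.1 h with h | h
  · exact le_max_of_le_left (zpow_le_zpow_right₀ this.le (by lia))
  · exact le_max_of_le_right (zpow_le_zpow_right₀ this.le (by lia))

lemma kabs_sub (x y : K Fq) : kabs Fq (x - y) ≤ max (kabs Fq x) (kabs Fq y) := by
  rw [sub_eq_add_neg, ← kabs_neg y]; exact kabs_add _ _

lemma kabs_one : kabs Fq 1 = 1 := by simp [kabs]

lemma kabs_inv (x : K Fq) : kabs Fq x⁻¹ = (kabs Fq x)⁻¹ := by
  by_cases hx : x = 0
  · simp [hx, kabs_zero]
  · have h : kabs Fq (x * x⁻¹) = 1 := by rw [mul_inv_cancel₀ hx, kabs_one]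
    rw [kabs_mul] at h
    exact (inv_eq_of_mul_eq_one_right h).symm

lemma kabs_div (x y : K Fq) : kabs Fq (x / y) = kabs Fq x / kabs Fq y := by
  rw [div_eq_mul_inv, kabs_mul, kabs_inv, div_eq_mul_inv]

lemma kabs_add_eq {x y : K Fq} (h : kabs Fq y < kabs Fq x) : kabs Fq (x + y) = kabs Fq x := by
  apply le_antisymm
  · exact (kabs_add x y).trans (by simp [h.le])
  · have h2 := kabs_sub (x + y) y
    rw [add_sub_cancel_right] at h2
    rcases le_max_iff.1 h2 with h2 | h2
    · exact h2
    · exact absurd h2 (not_le.2 h)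

/-- absolute value of a polynomial in `T` -/
def nrm (f : Polynomial Fq) : ℝ := kabs Fq (polyToK Fq f)

lemma nrm_def (f : Polynomial Fq) : kabs Fq (polyToK Fq f) = nrm f := rfl

lemma polyToK_X : polyToK Fq X = TT Fq := by simp [polyToK]

lemma polyToK_C (r : Fq) : polyToK Fq (C r) = HahnSeries.C r := by simp [polyToK]

lemma kabs_TT : kabs Fq (TT Fq) = Fintype.card Fq := by
  have : TT Fq ≠ 0 := by simp [TT]
  rw [kabs, if_neg this, TT, HahnSeries.order_single one_ne_zero]
  simp

lemma nrm_mul (f g : Polynomial Fq) : nrm (f * g) = nrm f * nrm g := by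
  simp [nrm, kabs_mul]

lemma nrm_pow (f : Polynomial Fq) (n : ℕ) : nrm (f ^ n) = nrm f ^ n := by
  induction n with
  | zero => simp [nrm, kabs_one]
  | succ n ih => rw [pow_succ, nrm_mul, ih, pow_succ]

lemma nrm_add (f g : Polynomial Fq) : nrm (f + g) ≤ max (nrm f) (nrm g) := by
  simp only [nrm, map_add]; exact kabs_add _ _

lemma nrm_sub (f g : Polynomial Fq) : nrm (f - g) ≤ max (nrm f) (nrm g) := by
  simp only [nrm, map_sub]; exact kabs_sub _ _

lemma nrm_neg (f : Polynomial Fq) : nrm (-f) = nrm f := by simp [nrm, kabs_neg]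

lemma nrm_add_eq {f g : Polynomial Fq} (h : nrm g < nrm f) : nrm (f + g) = nrm f := by
  simp only [nrm, map_add]; exact kabs_add_eq h

lemma nrm_zero : nrm (0 : Polynomial Fq) = 0 := by simp [nrm, kabs_zero]

lemma nrm_one : nrm (1 : Polynomial Fq) = 1 := by simp [nrm, kabs_one]

lemma nrm_nonneg (f : Polynomial Fq) : 0 ≤ nrm f := kabs_nonneg _

lemma nrm_C {r : Fq} (hr : r ≠ 0) : nrm (C r) = 1 := by
  rw [nrm, polyToK_C, kabs, if_neg (by simpa using hr), HahnSeries.order_C]; simp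

lemma nrm_eq_pow (f : Polynomial Fq) (hf : f ≠ 0) :
    nrm f = (Fintype.card Fq : ℝ) ^ f.natDegree := by
  have hq := card_gt (Fq := Fq)
  induction hn : f.natDegree using Nat.strong_induction_on generalizing f with
  | _ n ih =>
    have hl : f.leadingCoeff ≠ 0 := leadingCoeff_ne_zero.2 hf
    have h1 : nrm (C f.leadingCoeff * X ^ f.natDegree) = (Fintype.card Fq : ℝ) ^ n := by
      rw [nrm_mul, nrm_pow, nrm_C hl, one_mul, hn, nrm, polyToK_X, kabs_TT]
    have h2 := f.eraseLead_add_C_mul_X_pow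
    rw [add_comm] at h2
    rw [← h2, nrm_add_eq, h1]
    rw [h1]
    by_cases he : f.eraseLead = 0
    · rw [he, nrm_zero]; positivity
    · have hd : f.eraseLead.natDegree < n := by
        have h3 := f.eraseLead_natDegree_le
        by_cases h0 : f.natDegree = 0
        · exfalso
          apply he
          rw [eq_C_of_natDegree_eq_zero h0]; simp
        · lia
      rw [ih _ hd _ he rfl]
      exact pow_lt_pow_right₀ hq hd

lemma nrm_ge_one {f : Polynomial Fq} (hf : f ≠ 0) : 1 ≤ nrm f := by
  rw [nrm_eq_pow f hf]; exact one_le_pow₀ (card_gt (Fq := Fq)).le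

lemma nrm_pos {f : Polynomial Fq} (hf : f ≠ 0) : 0 < nrm f := lt_of_lt_of_le one_pos (nrm_ge_one hf)

lemma nrm_ge_two {f : Polynomial Fq} (hf : 1 ≤ f.natDegree) : 2 ≤ nrm f := by
  have h0 : f ≠ 0 := by rintro rfl; simp at hf
  have h2 : (2 : ℝ) ≤ Fintype.card Fq := by exact_mod_cast Fintype.one_lt_card (α := Fq)
  rw [nrm_eq_pow f h0]
  calc (2 : ℝ) ≤ Fintype.card Fq := h2
    _ = (Fintype.card Fq : ℝ) ^ 1 := (pow_one _).symm
    _ ≤ _ := pow_le_pow_right₀ (by linarith) hf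

lemma nrm_le_of_dvd {f g : Polynomial Fq} (hg : g ≠ 0) (h : f ∣ g) : nrm f ≤ nrm g := by
  obtain ⟨k, rfl⟩ := h
  have hk : k ≠ 0 := right_ne_zero_of_mul hg
  rw [nrm_mul]
  nlinarith [nrm_ge_one hk, nrm_nonneg f]

lemma polyToK_inj : Function.Injective (polyToK Fq) := by
  rw [injective_iff_map_eq_zero]
  intro f hf
  by_contra h
  have := nrm_pos h
  rw [nrm, hf, kabs_zero] at this
  exact lt_irrefl _ this

/-! heights -/

lemma Hpoly_le {P : Polynomial (Polynomial Fq)} {B : ℝ} (h : ∀ i, nrm (P.coeff i) ≤ B) :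
    Hpoly Fq P ≤ B := ciSup_le h

lemma le_Hpoly (P : Polynomial (Polynomial Fq)) (i : ℕ) : nrm (P.coeff i) ≤ Hpoly Fq P := by
  refine le_ciSup (f := fun i : ℕ => kabs Fq (polyToK Fq (P.coeff i))) ?_ i
  refine ⟨∑ j ∈ P.support, nrm (P.coeff j), ?_⟩
  rintro _ ⟨j, rfl⟩
  show nrm (P.coeff j) ≤ _
  by_cases hj : j ∈ P.support
  · exact Finset.single_le_sum (f := fun j => nrm (P.coeff j)) (fun k _ => nrm_nonneg _) hj
  · rw [notMem_support_iff.1 hj, nrm_zero]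
    exact Finset.sum_nonneg fun k _ => nrm_nonneg _

/-! minimal polynomials -/

lemma evalL_toL (P : Polynomial (Polynomial Fq)) (ξ : K Fq) :
    evalL Fq P (toL Fq ξ) = toL Fq (evalK Fq P ξ) := by
  simp only [evalL, evalK, φ]
  rw [Polynomial.hom_eval₂]

lemma toL_inj : Function.Injective (toL Fq) := (toL Fq).injective

lemma evalL_eq_zero (P : Polynomial (Polynomial Fq)) (ξ : K Fq) :
    evalL Fq P (toL Fq ξ) = 0 ↔ evalK Fq P ξ = 0 := by
  rw [evalL_toL, map_eq_zero_iff _ toL_inj]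

lemma dvd_of_root {P Q : Polynomial (Polynomial Fq)} (hQ : Irreducible Q) (hp : Q.IsPrimitive)
    {ξ : K Fq} (h1 : evalK Fq Q ξ = 0) (h2 : evalK Fq P ξ = 0) : Q ∣ P := by
  let F := FractionRing (Polynomial Fq)
  apply hp.dvd_of_fraction_map_dvd_fraction_map (K := F)
  by_contra hnd
  have hirr : Irreducible (Q.map (algebraMap (Polynomial Fq) F)) :=
    (hp.irreducible_iff_irreducible_map_fraction_map (K := F)).1 hQ
  obtain ⟨u, v, huv⟩ := hirr.coprime_iff_not_dvd.2 hnd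
  let ψ : F →+* K Fq := IsFractionRing.lift (g := polyToK Fq) polyToK_inj
  have hψ : ψ.comp (algebraMap (Polynomial Fq) F) = polyToK Fq := by
    refine RingHom.ext fun x => ?_
    exact IsFractionRing.lift_algebraMap (K := F) polyToK_inj x
  have h := congrArg (Polynomial.eval₂ ψ ξ) huv
  have e : ∀ R : Polynomial (Polynomial Fq),
      Polynomial.eval₂ ψ ξ (R.map (algebraMap (Polynomial Fq) F)) = evalK Fq R ξ := by
    intro R
    rw [Polynomial.eval₂_map, hψ, evalK]
  rw [eval₂_add, eval₂_mul, eval₂_mul, e, e, h1, h2] at h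
  simp at h

lemma exists_minpoly {P : Polynomial (Polynomial Fq)} (hP : P ≠ 0) {ξ : K Fq}
    (h : evalK Fq P ξ = 0) : ∃ Q, IsMinPolyOf Fq Q (toL Fq ξ) := by
  -- an irreducible factor vanishing at `ξ`
  have key : ∃ Q : Polynomial (Polynomial Fq), Irreducible Q ∧ evalK Fq Q ξ = 0 := by
    induction P using WfDvdMonoid.induction_on_irreducible with
    | zero => exact absurd rfl hP
    | unit u hu =>
      exfalso
      have : IsUnit (Polynomial.eval₂RingHom (polyToK Fq) ξ u) := hu.map _
      exact this.ne_zero h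
    | mul a i ha hi ih =>
      rw [evalK, eval₂_mul, mul_eq_zero] at h
      rcases h with h | h
      · exact ⟨i, hi, h⟩
      · exact ih ha h
  obtain ⟨Q, hQ, h0⟩ := key
  have hdeg : Q.natDegree ≠ 0 := by
    intro hd
    rw [eq_C_of_natDegree_eq_zero hd, evalK, eval₂_C, map_eq_zero_iff _ polyToK_inj] at h0
    apply hQ.ne_zero
    rw [eq_C_of_natDegree_eq_zero hd, h0, C_0]
  have hl : Q.leadingCoeff.leadingCoeff ≠ 0 :=
    leadingCoeff_ne_zero.2 (leadingCoeff_ne_zero.2 hQ.ne_zero)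
  set r := Q.leadingCoeff.leadingCoeff⁻¹ with hr
  have hr0 : r ≠ 0 := inv_ne_zero hl
  have hu : IsUnit (C (C r) : Polynomial (Polynomial Fq)) :=
    ((isUnit_iff_ne_zero.2 hr0).map C).map C
  have hirr : Irreducible (C (C r) * Q) := (irreducible_isUnit_mul hu).2 hQ
  have hnd : (C (C r) * Q).natDegree = Q.natDegree :=
    natDegree_C_mul (by simpa using hr0)
  refine ⟨C (C r) * Q, ?_, hirr, hirr.isPrimitive (by rw [hnd]; exact hdeg), ?_, ?_⟩
  · rw [hnd]; lia
  · rw [leadingCoeff_mul, leadingCoeff_C, Monic, leadingCoeff_mul, leadingCoeff_C]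
    exact inv_mul_cancel₀ hl
  · rw [evalL_eq_zero, evalK, eval₂_mul]
    rw [evalK] at h0
    rw [h0, mul_zero]

/-! continued fractions -/

lemma qSeq_lt {a : ℕ → Polynomial Fq} (had : ∀ k, 1 ≤ k → 1 ≤ (a k).natDegree) (k : ℕ) :
    nrm (qSeq Fq a k) < nrm (qSeq Fq a (k + 1)) := by
  induction k with
  | zero => simp [qSeq, nrm_zero, nrm_one]
  | succ k ih =>
    have h2 := nrm_ge_two (had (k + 1) (by lia))
    have h0 := nrm_nonneg (qSeq Fq a k)
    have h1 : nrm (qSeq Fq a k) < nrm (a (k + 1) * qSeq Fq a (k + 1)) := by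
      rw [nrm_mul]; nlinarith
    rw [show qSeq Fq a (k + 1 + 1) = a (k + 1) * qSeq Fq a (k + 1) + qSeq Fq a k from rfl,
      nrm_add_eq h1, nrm_mul]
    nlinarith

lemma qSeq_eq {a : ℕ → Polynomial Fq} (had : ∀ k, 1 ≤ k → 1 ≤ (a k).natDegree) (k : ℕ) :
    nrm (qSeq Fq a (k + 2)) = nrm (a (k + 1)) * nrm (qSeq Fq a (k + 1)) := by
  have h2 := nrm_ge_two (had (k + 1) (by lia))
  have h0 := nrm_nonneg (qSeq Fq a k)
  have ih := qSeq_lt had k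
  have h1 : nrm (qSeq Fq a k) < nrm (a (k + 1) * qSeq Fq a (k + 1)) := by
    rw [nrm_mul]; nlinarith
  rw [show qSeq Fq a (k + 2) = a (k + 1) * qSeq Fq a (k + 1) + qSeq Fq a k from rfl,
      nrm_add_eq h1, nrm_mul]

lemma qSeq_mono {a : ℕ → Polynomial Fq} (had : ∀ k, 1 ≤ k → 1 ≤ (a k).natDegree) :
    StrictMono fun k => nrm (qSeq Fq a k) := strictMono_nat_of_lt_succ (qSeq_lt had)

lemma qSeq_ge {a : ℕ → Polynomial Fq} (had : ∀ k, 1 ≤ k → 1 ≤ (a k).natDegree) (k : ℕ) :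
    (2 : ℝ) ^ k ≤ nrm (qSeq Fq a (k + 1)) := by
  induction k with
  | zero => simp [qSeq, nrm_one]
  | succ k ih =>
    have h2 := nrm_ge_two (had (k + 1) (by lia))
    have h3 : (0 : ℝ) < 2 ^ k := by positivity
    rw [qSeq_eq had k, pow_succ]
    nlinarith

lemma qSeq_ne {a : ℕ → Polynomial Fq} (had : ∀ k, 1 ≤ k → 1 ≤ (a k).natDegree) (k : ℕ) :
    qSeq Fq a (k + 1) ≠ 0 := by
  intro h
  have := qSeq_ge had k
  rw [h, nrm_zero] at this
  have h3 : (0 : ℝ) < 2 ^ k := by positivity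
  linarith

lemma pSeq_le {a : ℕ → Polynomial Fq} (ha0 : a 0 = 0)
    (had : ∀ k, 1 ≤ k → 1 ≤ (a k).natDegree) (k : ℕ) :
    nrm (pSeq Fq a (k + 1)) ≤ nrm (qSeq Fq a (k + 1)) := by
  induction k using Nat.twoStepInduction with
  | zero => simp [pSeq, qSeq, ha0, nrm_zero, nrm_one]
  | one =>
    have h2 := nrm_ge_two (had 1 (by lia))
    simp only [pSeq, qSeq, ha0, mul_zero, zero_add, nrm_one, mul_one, add_zero]
    linarith
  | more k ih1 ih2 =>
    have h2 := nrm_ge_two (had (k + 2) (by lia))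
    rw [show pSeq Fq a (k + 2 + 1) = a (k + 2) * pSeq Fq a (k + 1 + 1) + pSeq Fq a (k + 1) from rfl]
    refine (nrm_add _ _).trans (max_le ?_ ?_)
    · rw [qSeq_eq had (k + 1), nrm_mul]
      exact mul_le_mul_of_nonneg_left ih2 (nrm_nonneg _)
    · exact ih1.trans ((qSeq_mono had).monotone (by lia))

lemma det_sq (a : ℕ → Polynomial Fq) (k : ℕ) :
    (pSeq Fq a (k + 1) * qSeq Fq a k - pSeq Fq a k * qSeq Fq a (k + 1)) ^ 2 = 1 := by
  induction k with
  | zero => simp [pSeq, qSeq]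
  | succ k ih =>
    rw [← ih]
    rw [show pSeq Fq a (k + 1 + 1) = a (k + 1) * pSeq Fq a (k + 1) + pSeq Fq a k from rfl,
      show qSeq Fq a (k + 1 + 1) = a (k + 1) * qSeq Fq a (k + 1) + qSeq Fq a k from rfl]
    ring

/-- the linear form `q_k ξ - p_k` -/
def NK (a : ℕ → Polynomial Fq) (ξ : K Fq) (k : ℕ) : K Fq :=
  polyToK Fq (qSeq Fq a k) * ξ - polyToK Fq (pSeq Fq a k)

lemma NK_rec (a : ℕ → Polynomial Fq) (ξ : K Fq) (k : ℕ) :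
    NK a ξ (k + 2) = polyToK Fq (a (k + 1)) * NK a ξ (k + 1) + NK a ξ k := by
  simp only [NK, qSeq, pSeq, map_add, map_mul]; ring

lemma kabs_NK {a : ℕ → Polynomial Fq} {ξ : K Fq} (h : IsCFOf Fq ξ a) (k : ℕ) :
    kabs Fq (NK a ξ (k + 1)) = (nrm (qSeq Fq a (k + 2)))⁻¹ := by
  have h1 := h.2 k
  have hq : polyToK Fq (qSeq Fq a (k + 1)) ≠ 0 :=
    (map_ne_zero_iff _ polyToK_inj).2 (qSeq_ne h.1 k)
  have e : NK a ξ (k + 1) = polyToK Fq (qSeq Fq a (k + 1)) *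
      (ξ - polyToK Fq (pSeq Fq a (k + 1)) / polyToK Fq (qSeq Fq a (k + 1))) := by
    rw [NK]; field_simp
  rw [e, kabs_mul, h1, nrm_def, nrm_def]
  have := nrm_pos (qSeq_ne h.1 k)
  have := nrm_pos (qSeq_ne h.1 (k + 1))
  field_simp

lemma kabs_NK_le {a : ℕ → Polynomial Fq} {ξ : K Fq} (h : IsCFOf Fq ξ a) (k : ℕ) :
    kabs Fq (NK a ξ (k + 1)) ≤ (1 / 2) ^ k := by
  rw [kabs_NK h, one_div, inv_pow]
  apply inv_anti₀ (by positivity)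
  exact (qSeq_ge h.1 k).trans ((qSeq_mono h.1).monotone (by lia))

lemma NK_ne {a : ℕ → Polynomial Fq} {ξ : K Fq} (h : IsCFOf Fq ξ a) (k : ℕ) :
    NK a ξ (k + 1) ≠ 0 := by
  intro h0
  have h1 := kabs_NK h k
  rw [h0, kabs_zero] at h1
  exact (inv_pos.2 (nrm_pos (qSeq_ne h.1 (k + 1)))).ne h1

lemma irrational {a : ℕ → Polynomial Fq} {ξ : K Fq} (h : IsCFOf Fq ξ a)
    (r s : Polynomial Fq) (hs : s ≠ 0) : polyToK Fq s * ξ + polyToK Fq r ≠ 0 := by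
  intro h0
  have hs1 := nrm_pos hs
  obtain ⟨k, hk⟩ := exists_pow_lt_of_lt_one (inv_pos.2 hs1) (by norm_num : (1 / 2 : ℝ) < 1)
  have h1 := kabs_NK_le h k
  have e : polyToK Fq s * NK a ξ (k + 1) =
      polyToK Fq (- (qSeq Fq a (k + 1) * r + s * pSeq Fq a (k + 1))) := by
    simp only [NK, map_neg, map_add, map_mul]
    linear_combination polyToK Fq (qSeq Fq a (k + 1)) * h0
  have hne : - (qSeq Fq a (k + 1) * r + s * pSeq Fq a (k + 1)) ≠ 0 := by
    intro hz
    rw [hz, map_zero] at e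
    rcases mul_eq_zero.1 e with e | e
    · exact hs ((map_eq_zero_iff _ polyToK_inj).1 e)
    · exact NK_ne h k e
  have h2 := nrm_ge_one hne
  rw [nrm, ← e, kabs_mul, nrm_def] at h2
  have h3 : nrm s * kabs Fq (NK a ξ (k + 1)) < nrm s * (nrm s)⁻¹ :=
    mul_lt_mul_of_pos_left (lt_of_le_of_lt h1 hk) hs1
  rw [mul_inv_cancel₀ hs1.ne'] at h3
  linarith

lemma quad_vanish {a : ℕ → Polynomial Fq} {ξ : K Fq} (h : IsCFOf Fq ξ a) (n m : ℕ)
    (hm : 1 ≤ m) (hper : ∀ i, n < i → a (i + m) = a i) :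
    NK a ξ n * NK a ξ (n + m + 1) - NK a ξ (n + 1) * NK a ξ (n + m) = 0 := by
  have step : ∀ k, kabs Fq (NK a ξ (n + k) * NK a ξ (n + k + m + 1)
      - NK a ξ (n + k + 1) * NK a ξ (n + k + m)) =
      kabs Fq (NK a ξ n * NK a ξ (n + m + 1) - NK a ξ (n + 1) * NK a ξ (n + m)) := by
    intro k
    induction k with
    | zero => rfl
    | succ k ih =>
      rw [← ih, ← kabs_neg]
      congr 1
      have e1 := NK_rec a ξ (n + k)
      have e2 := NK_rec a ξ (n + k + m)
      have e3 := hper (n + k + 1) (by lia)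
      rw [show n + k + 1 + m = n + k + m + 1 by lia] at e3
      rw [e3] at e2
      rw [show n + (k + 1) = n + k + 1 by lia,
        show n + k + 1 + m = n + k + m + 1 by lia, show n + k + m + 1 + 1 = n + k + m + 2 by lia,
        show n + k + 1 + 1 = n + k + 2 by lia, e1, e2]
      ring
  by_contra hne
  have hpos := kabs_pos hne
  obtain ⟨k, hk⟩ := exists_pow_lt_of_lt_one hpos (by norm_num : (1 / 2 : ℝ) < 1)
  rw [← step (k + 1)] at hk
  have b : ∀ j, k ≤ j → kabs Fq (NK a ξ (j + 1)) ≤ (1 / 2) ^ k := fun j hj =>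
    (kabs_NK_le h j).trans (pow_le_pow_of_le_one (by norm_num) (by norm_num) hj)
  have b1 : ∀ j, kabs Fq (NK a ξ (j + 1)) ≤ 1 := fun j =>
    (kabs_NK_le h j).trans (pow_le_one₀ (by norm_num) (by norm_num))
  apply absurd hk
  rw [not_lt]
  refine (kabs_sub _ _).trans (max_le ?_ ?_) <;> rw [kabs_mul]
  · rw [← mul_one ((1 / 2 : ℝ) ^ k)]
    exact mul_le_mul (b (n + k) (by lia)) (b1 _) (kabs_nonneg _) (by positivity)
  · rw [← mul_one ((1 / 2 : ℝ) ^ k)]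
    refine mul_le_mul (b (n + k + 1) (by lia)) ?_ (kabs_nonneg _) (by positivity)
    rw [show n + (k + 1) + m = n + k + m + 1 by lia]
    exact b1 _

/-- Continuants of the constant word `b, b, …`. -/
def fSeq (b : Polynomial Fq) : ℕ → Polynomial Fq
  | 0 => 0
  | 1 => 1
  | (k + 2) => b * fSeq b (k + 1) + fSeq b k

lemma fSeq_coprime (b : Polynomial Fq) (k : ℕ) : IsCoprime (fSeq b (k + 1)) (fSeq b k) := by
  induction k with
  | zero => exact isCoprime_one_left
  | succ k ih =>
    rw [show fSeq b (k + 1 + 1) = b * fSeq b (k + 1) + fSeq b k from rfl]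
    obtain ⟨u, v, huv⟩ := ih
    exact ⟨v, u - v * b, by linear_combination huv⟩

lemma seq_fSeq {a x : ℕ → Polynomial Fq} (hx : ∀ k, x (k + 2) = a (k + 1) * x (k + 1) + x k)
    {b : Polynomial Fq} {n m : ℕ} (hab : ∀ i, n < i → i < n + m → a i = b) (k : ℕ) (hk : k < m) :
    x (n + 1 + k) = fSeq b (k + 1) * x (n + 1) + fSeq b k * x n := by
  induction k using Nat.twoStepInduction with
  | zero => simp [fSeq]
  | one => simp [fSeq, hx n, hab (n + 1) (by lia) (by lia)]
  | more k ih1 ih2 =>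
    rw [show n + 1 + (k + 2) = n + 1 + k + 2 by lia, hx, hab _ (by lia) (by lia),
      show n + 1 + k + 1 = n + 1 + (k + 1) by lia, ih1 (by lia), ih2 (by lia)]
    simp only [fSeq]
    ring

/-- The (not necessarily primitive) quadratic polynomial. -/
def quadP (a : ℕ → Polynomial Fq) (n m : ℕ) : Polynomial (Polynomial Fq) :=
  C (qSeq Fq a n * qSeq Fq a (n + m + 1) - qSeq Fq a (n + 1) * qSeq Fq a (n + m)) * X ^ 2 +
  C (- (qSeq Fq a n * pSeq Fq a (n + m + 1) + pSeq Fq a n * qSeq Fq a (n + m + 1)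
    - qSeq Fq a (n + 1) * pSeq Fq a (n + m) - pSeq Fq a (n + 1) * qSeq Fq a (n + m))) * X +
  C (pSeq Fq a n * pSeq Fq a (n + m + 1) - pSeq Fq a (n + 1) * pSeq Fq a (n + m))

lemma quadP_eval {a : ℕ → Polynomial Fq} (n m : ℕ) (ξ : K Fq) : evalK Fq (quadP a n m) ξ =
    NK a ξ n * NK a ξ (n + m + 1) - NK a ξ (n + 1) * NK a ξ (n + m) := by
  simp only [evalK, quadP, NK, eval₂_add, eval₂_mul, eval₂_C, eval₂_X_pow, eval₂_X]
  simp only [map_sub, map_mul, map_neg, map_add]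
  ring

lemma quadP_content {a : ℕ → Polynomial Fq} {b : Polynomial Fq} {n m : ℕ} (hm : 1 ≤ m)
    (hab : ∀ i, n < i → i < n + m → a i = b) {g : Polynomial Fq}
    (h2 : g ∣ (quadP a n m).coeff 2) (h1 : g ∣ (quadP a n m).coeff 1)
    (h0 : g ∣ (quadP a n m).coeff 0) :
    g ∣ fSeq b m ∧ g ∣ fSeq b m + (a (n + m) - b) * fSeq b (m - 1) := by
  obtain ⟨k, rfl⟩ : ∃ k, m = k + 1 := ⟨m - 1, by lia⟩
  have hd := det_sq a n
  have q1 := seq_fSeq (x := qSeq Fq a) (fun _ => rfl) hab k (by lia)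
  have p1 := seq_fSeq (x := pSeq Fq a) (fun _ => rfl) hab k (by lia)
  -- the next convergent, with last partial quotient `a (n + m)`
  have key : ∀ x : ℕ → Polynomial Fq, (∀ k, x (k + 2) = a (k + 1) * x (k + 1) + x k) →
      x (n + (k + 1) + 1) = (a (n + (k + 1)) * fSeq b (k + 1) + fSeq b k) * x (n + 1) +
        (fSeq b (k + 1) + (a (n + (k + 1)) - b) * fSeq b k) * x n := by
    intro x hx
    have e1 := seq_fSeq hx hab k (by lia)
    rcases k with _ | k
    · simp [fSeq, hx]
    · have e0 := seq_fSeq hx hab k (by lia)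
      rw [show n + (k + 1 + 1) + 1 = n + k + 1 + 2 by lia, hx,
        show n + k + 1 + 1 = n + 1 + (k + 1) by lia, e1,
        show n + k + 1 = n + 1 + k by lia, e0,
        show n + (k + 1 + 1) = n + 1 + (k + 1) by lia]
      simp only [fSeq]
      ring
  have q2 := key (qSeq Fq a) (fun _ => rfl)
  have p2 := key (pSeq Fq a) (fun _ => rfl)
  rw [show n + 1 + k = n + (k + 1) by lia] at q1 p1
  simp only [quadP, coeff_add, coeff_C_mul, coeff_X_pow, coeff_X, coeff_C] at h0 h1 h2
  norm_num at h0 h1 h2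
  rw [q1, q2] at h2
  rw [q1, q2, p1, p2] at h1
  rw [p1, p2] at h0
  rw [add_tsub_cancel_right]
  generalize qSeq Fq a n = q at *
  generalize qSeq Fq a (n + 1) = q' at *
  generalize pSeq Fq a n = p at *
  generalize pSeq Fq a (n + 1) = p' at *
  generalize fSeq b (k + 1) = f' at *
  generalize fSeq b k = f at *
  generalize a (n + (k + 1)) = d at *
  constructor
  · have h := (((h2.mul_right (p ^ 2)).add (h1.mul_right (p * q))).add (h0.mul_right (q ^ 2)))
    exact (dvd_neg.1 (h.trans (dvd_of_eq (b := - f') (by linear_combination (-f') * hd))))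
  · have h := (((h2.mul_right (p' ^ 2)).add (h1.mul_right (p' * q'))).add (h0.mul_right (q' ^ 2)))
    exact h.trans (dvd_of_eq (by linear_combination (f' + (d - b) * f) * hd))

lemma quadP_coeff2 (a : ℕ → Polynomial Fq) (n m : ℕ) : (quadP a n m).coeff 2 =
    qSeq Fq a n * qSeq Fq a (n + m + 1) - qSeq Fq a (n + 1) * qSeq Fq a (n + m) := by
  simp only [quadP, coeff_add, coeff_C_mul, coeff_X_pow, coeff_X, coeff_C]
  norm_num

lemma quadP_coeff1 (a : ℕ → Polynomial Fq) (n m : ℕ) : (quadP a n m).coeff 1 =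
    - (qSeq Fq a n * pSeq Fq a (n + m + 1) + pSeq Fq a n * qSeq Fq a (n + m + 1)
    - qSeq Fq a (n + 1) * pSeq Fq a (n + m) - pSeq Fq a (n + 1) * qSeq Fq a (n + m)) := by
  simp only [quadP, coeff_add, coeff_C_mul, coeff_X_pow, coeff_X, coeff_C]
  norm_num

lemma quadP_coeff0 (a : ℕ → Polynomial Fq) (n m : ℕ) : (quadP a n m).coeff 0 =
    pSeq Fq a n * pSeq Fq a (n + m + 1) - pSeq Fq a (n + 1) * pSeq Fq a (n + m) := by
  simp only [quadP, coeff_add, coeff_C_mul, coeff_X_pow, coeff_X, coeff_C]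
  norm_num

lemma quadP_natDegree_le (a : ℕ → Polynomial Fq) (n m : ℕ) : (quadP a n m).natDegree ≤ 2 :=
  natDegree_quadratic_le

lemma quadP_coeff_le {a : ℕ → Polynomial Fq} (ha0 : a 0 = 0)
    (had : ∀ k, 1 ≤ k → 1 ≤ (a k).natDegree) {n m : ℕ} (hn : 1 ≤ n) (hm : 1 ≤ m) (i : ℕ) :
    nrm ((quadP a n m).coeff i) ≤ nrm (qSeq Fq a (n + 1)) * nrm (qSeq Fq a (n + m + 1)) := by
  have hmono := (qSeq_mono had).monotone
  have A : ∀ {x y : Polynomial Fq}, nrm x ≤ nrm (qSeq Fq a (n + 1)) →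
      nrm y ≤ nrm (qSeq Fq a (n + m + 1)) →
      nrm (x * y) ≤ nrm (qSeq Fq a (n + 1)) * nrm (qSeq Fq a (n + m + 1)) := by
    intro x y hx hy
    rw [nrm_mul]
    exact mul_le_mul hx hy (nrm_nonneg _) (nrm_nonneg _)
  have q0 : nrm (qSeq Fq a n) ≤ nrm (qSeq Fq a (n + 1)) := hmono (by lia)
  have q1 : nrm (qSeq Fq a (n + m)) ≤ nrm (qSeq Fq a (n + m + 1)) := hmono (by lia)
  have p0 : nrm (pSeq Fq a n) ≤ nrm (qSeq Fq a (n + 1)) := by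
    obtain ⟨k, rfl⟩ : ∃ k, n = k + 1 := ⟨n - 1, by lia⟩
    exact (pSeq_le ha0 had k).trans q0
  have p0' := pSeq_le ha0 had n
  have p1 : nrm (pSeq Fq a (n + m)) ≤ nrm (qSeq Fq a (n + m + 1)) := by
    obtain ⟨k, rfl⟩ : ∃ k, m = k + 1 := ⟨m - 1, by lia⟩
    exact (pSeq_le ha0 had (n + k)).trans q1
  have p1' := pSeq_le ha0 had (n + m)
  match i with
  | 0 =>
    rw [quadP_coeff0]
    exact (nrm_sub _ _).trans (max_le (A p0 p1') (A p0' p1))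
  | 1 =>
    rw [quadP_coeff1, nrm_neg]
    refine (nrm_sub _ _).trans (max_le ((nrm_sub _ _).trans (max_le ((nrm_add _ _).trans
      (max_le (A q0 p1') (A p0 le_rfl))) (A le_rfl p1))) (A p0' q1))
  | 2 =>
    rw [quadP_coeff2]
    exact (nrm_sub _ _).trans (max_le (A q0 le_rfl) (A le_rfl q1))
  | (k + 3) =>
    rw [coeff_eq_zero_of_natDegree_lt (lt_of_le_of_lt (quadP_natDegree_le a n m) (by lia)), nrm_zero]
    exact mul_nonneg (nrm_nonneg _) (nrm_nonneg _)

lemma quadP_lead {a : ℕ → Polynomial Fq}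
    (had : ∀ k, 1 ≤ k → 1 ≤ (a k).natDegree) {n m : ℕ} (hn : 1 ≤ n) (hm : 1 ≤ m)
    (hne : a n ≠ a (n + m)) :
    nrm ((quadP a n m).coeff 2) * (nrm (a n) * nrm (a (n + m))) =
      nrm (a (n + m) - a n) * (nrm (qSeq Fq a (n + 1)) * nrm (qSeq Fq a (n + m + 1))) := by
  obtain ⟨k, rfl⟩ : ∃ k, n = k + 1 := ⟨n - 1, by lia⟩
  obtain ⟨l, rfl⟩ : ∃ l, m = l + 1 := ⟨m - 1, by lia⟩
  have e : (quadP a (k + 1) (l + 1)).coeff 2 =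
      (a (k + 1 + (l + 1)) - a (k + 1)) * (qSeq Fq a (k + 1) * qSeq Fq a (k + 1 + (l + 1))) +
      (qSeq Fq a (k + 1) * qSeq Fq a (k + l + 1) - qSeq Fq a k * qSeq Fq a (k + 1 + (l + 1))) := by
    rw [quadP_coeff2]
    have h1 : qSeq Fq a (k + 1 + (l + 1) + 1) =
      a (k + 1 + (l + 1)) * qSeq Fq a (k + 1 + (l + 1)) + qSeq Fq a (k + l + 1) := by
      rw [show k + 1 + (l + 1) + 1 = k + l + 1 + 2 by lia,
        show k + 1 + (l + 1) = k + l + 1 + 1 by lia]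
      rfl
    have h2 : qSeq Fq a (k + 1 + 1) = a (k + 1) * qSeq Fq a (k + 1) + qSeq Fq a k := rfl
    rw [h1, h2]; ring
  have hd : 1 ≤ nrm (a (k + 1 + (l + 1)) - a (k + 1)) := nrm_ge_one (sub_ne_zero.2 hne.symm)
  have l1 : nrm (qSeq Fq a k) < nrm (qSeq Fq a (k + 1)) := qSeq_lt had k
  have l2 : nrm (qSeq Fq a (k + l + 1)) < nrm (qSeq Fq a (k + 1 + (l + 1))) :=
    qSeq_mono had (by lia)
  have n1 := nrm_nonneg (qSeq Fq a k)
  have n2 := nrm_nonneg (qSeq Fq a (k + l + 1))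
  have hlt : nrm (qSeq Fq a (k + 1) * qSeq Fq a (k + l + 1)
      - qSeq Fq a k * qSeq Fq a (k + 1 + (l + 1))) <
      nrm ((a (k + 1 + (l + 1)) - a (k + 1)) *
        (qSeq Fq a (k + 1) * qSeq Fq a (k + 1 + (l + 1)))) := by
    have t : nrm (qSeq Fq a (k + 1)) * nrm (qSeq Fq a (k + 1 + (l + 1))) ≤
        nrm (a (k + 1 + (l + 1)) - a (k + 1)) *
          (nrm (qSeq Fq a (k + 1)) * nrm (qSeq Fq a (k + 1 + (l + 1)))) :=
      le_mul_of_one_le_left (mul_nonneg (n1.trans l1.le) (n2.trans l2.le)) hd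
    refine lt_of_le_of_lt (nrm_sub _ _) (max_lt ?_ ?_) <;> simp only [nrm_mul] <;>
      refine lt_of_lt_of_le ?_ t
    · exact mul_lt_mul_of_pos_left l2 (lt_of_le_of_lt n1 l1)
    · exact mul_lt_mul_of_pos_right l1 (lt_of_le_of_lt n2 l2)
  rw [e, nrm_add_eq hlt, nrm_mul, nrm_mul, qSeq_eq had k,
    show k + 1 + (l + 1) + 1 = k + l + 1 + 2 by lia, qSeq_eq had (k + l + 1),
    show k + 1 + (l + 1) = k + l + 1 + 1 by lia]
  ring

lemma core {a : ℕ → Polynomial Fq} {ξ : K Fq} (ha0 : a 0 = 0) (h : IsCFOf Fq ξ a)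
    {b e : Polynomial Fq} {n m : ℕ} (hn : 1 ≤ n) (hm : 1 ≤ m)
    (hper : ∀ i, n < i → a (i + m) = a i) (hab : ∀ i, n < i → i < n + m → a i = b)
    (hne : a n ≠ a (n + m)) (he : e ≠ 0)
    (hg : ∀ g, g ∣ fSeq b m → g ∣ fSeq b m + (a (n + m) - b) * fSeq b (m - 1) → g ∣ e) :
    (∃ P, IsMinPolyOf Fq P (toL Fq ξ) ∧ P.natDegree = 2) ∧
    (nrm (a n) * nrm (a (n + m)) * nrm e)⁻¹ *
      (nrm (qSeq Fq a (n + 1)) * nrm (qSeq Fq a (n + m + 1))) ≤ heightAlg Fq (toL Fq ξ) ∧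
    heightAlg Fq (toL Fq ξ) ≤ nrm (qSeq Fq a (n + 1)) * nrm (qSeq Fq a (n + m + 1)) := by
  have had := h.1
  have hQn := nrm_pos (qSeq_ne had n)
  have hQm := nrm_pos (qSeq_ne had (n + m))
  have han := nrm_ge_two (had n hn)
  have ham := nrm_ge_two (had (n + m) (by lia))
  have hlead := quadP_lead had hn hm hne
  have hd : 1 ≤ nrm (a (n + m) - a n) := nrm_ge_one (sub_ne_zero.2 hne.symm)
  have he1 := nrm_pos he
  have hc2 : (quadP a n m).coeff 2 ≠ 0 := by
    intro h0
    rw [h0, nrm_zero, zero_mul] at hlead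
    have : 0 < nrm (a (n + m) - a n) *
      (nrm (qSeq Fq a (n + 1)) * nrm (qSeq Fq a (n + m + 1))) := by positivity
    linarith
  have hP0 : quadP a n m ≠ 0 := by
    intro h0; rw [h0] at hc2; simp at hc2
  have hev : evalK Fq (quadP a n m) ξ = 0 := by
    rw [quadP_eval]; exact quad_vanish h n m hm hper
  -- every minimal polynomial
  have main : ∀ Q, IsMinPolyOf Fq Q (toL Fq ξ) →
      Q.natDegree = 2 ∧ ∃ g, g ≠ 0 ∧ g ∣ e ∧ quadP a n m = C g * Q := by
    rintro Q ⟨hdeg, hirr, hprim, -, hroot⟩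
    rw [evalL_eq_zero] at hroot
    obtain ⟨R, hR⟩ := dvd_of_root hirr hprim hroot hev
    have hR0 : R ≠ 0 := by rintro rfl; exact hP0 (by simpa using hR)
    have hdegs : (quadP a n m).natDegree = Q.natDegree + R.natDegree := by
      rw [hR, natDegree_mul hirr.ne_zero hR0]
    have hle := quadP_natDegree_le a n m
    have hne1 : Q.natDegree ≠ 1 := by
      intro h1
      have e1 := Q.eq_X_add_C_of_natDegree_le_one h1.le
      have hl : Q.coeff 1 ≠ 0 := by
        rw [← h1]; exact leadingCoeff_ne_zero.2 hirr.ne_zero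
      rw [e1, evalK] at hroot
      simp only [eval₂_add, eval₂_mul, eval₂_C, eval₂_X] at hroot
      exact irrational h _ _ hl hroot
    have hQ2 : Q.natDegree = 2 := by lia
    refine ⟨hQ2, R.coeff 0, ?_, ?_, ?_⟩
    · intro h0
      apply hR0
      rw [eq_C_of_natDegree_eq_zero (show R.natDegree = 0 by lia), h0, C_0]
    · have hRC := eq_C_of_natDegree_eq_zero (show R.natDegree = 0 by lia)
      have hdv : ∀ i, R.coeff 0 ∣ (quadP a n m).coeff i := by
        intro i
        rw [hR, hRC, coeff_mul_C, coeff_C_zero]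
        exact dvd_mul_left _ _
      obtain ⟨x, y⟩ := quadP_content hm hab (hdv 2) (hdv 1) (hdv 0)
      exact hg _ x y
    · rw [mul_comm, ← eq_C_of_natDegree_eq_zero (show R.natDegree = 0 by lia)]
      exact hR
  have hex : IsAlgElem Fq (toL Fq ξ) := exists_minpoly hP0 hev
  have hmp : IsMinPolyOf Fq (minPolyPrim Fq (toL Fq ξ)) (toL Fq ξ) := by
    rw [minPolyPrim, dif_pos hex]; exact hex.choose_spec
  obtain ⟨h2, g, hg0, hge, hPg⟩ := main _ hmp
  refine ⟨⟨_, hmp, h2⟩, ?_, ?_⟩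
  · refine le_trans ?_ (le_Hpoly (minPolyPrim Fq (toL Fq ξ)) 2)
    have hle := nrm_le_of_dvd he hge
    rw [hPg, coeff_C_mul, nrm_mul] at hlead
    set z := nrm ((minPolyPrim Fq (toL Fq ξ)).coeff 2) with hz
    have hz0 : 0 ≤ z := nrm_nonneg _
    rw [inv_mul_le_iff₀ (by positivity)]
    have t1 : nrm (qSeq Fq a (n + 1)) * nrm (qSeq Fq a (n + m + 1)) ≤
        nrm (a (n + m) - a n) * (nrm (qSeq Fq a (n + 1)) * nrm (qSeq Fq a (n + m + 1))) :=
      le_mul_of_one_le_left (by positivity) hd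
    rw [← hlead] at t1
    refine t1.trans ?_
    calc nrm g * z * (nrm (a n) * nrm (a (n + m)))
        ≤ nrm e * z * (nrm (a n) * nrm (a (n + m))) := by gcongr
      _ = _ := by ring
  · apply Hpoly_le
    intro i
    refine le_trans ?_ (quadP_coeff_le ha0 had hn hm i)
    rw [hPg, coeff_C_mul, nrm_mul]
    exact le_mul_of_one_le_left (nrm_nonneg _) (nrm_ge_one hg0)

end helpers

theorem stmt13 (Fq : Type) [Field Fq] [Fintype Fq]
    (b c d : Polynomial Fq)
    (hb : 1 ≤ b.natDegree) (hc : 1 ≤ c.natDegree) (hd : 1 ≤ d.natDegree)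
    (hbc : b ≠ c) (hbd : b ≠ d) (hcd : c ≠ d) :
    ∃ C₁ C₂ C₃ C₄ : ℝ, 0 < C₁ ∧ 0 < C₂ ∧ 0 < C₃ ∧ 0 < C₄ ∧
    (∀ n : ℕ, 1 ≤ n → ∀ a : ℕ → Polynomial Fq, a 0 = 0 →
      (∀ i : ℕ, 1 ≤ i → i ≤ n - 1 → 1 ≤ (a i).natDegree) →
      a n = c → (∀ i : ℕ, n < i → a i = b) →
      ∀ ξ : K Fq, IsCFOf Fq ξ a →
        (∃ P, IsMinPolyOf Fq P (toL Fq ξ) ∧ P.natDegree = 2) ∧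
        C₁ * kabs Fq (polyToK Fq (qSeq Fq a (n + 1))) ^ 2 ≤ heightAlg Fq (toL Fq ξ) ∧
        heightAlg Fq (toL Fq ξ) ≤ C₂ * kabs Fq (polyToK Fq (qSeq Fq a (n + 1))) ^ 2) ∧
    (∀ n : ℕ, 1 ≤ n → ∀ m : ℕ, 2 ≤ m → ∀ a : ℕ → Polynomial Fq, a 0 = 0 →
      (∀ i : ℕ, 1 ≤ i → i ≤ n - 1 → 1 ≤ (a i).natDegree) →
      a n = c → (∀ i : ℕ, n < i → a i = if (i - n) % m = 0 then d else b) →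
      ∀ ζ : K Fq, IsCFOf Fq ζ a →
        (∃ P, IsMinPolyOf Fq P (toL Fq ζ) ∧ P.natDegree = 2) ∧
        C₃ * kabs Fq (polyToK Fq (qSeq Fq a (n + 1) * qSeq Fq a (n + m + 1))) ≤
          heightAlg Fq (toL Fq ζ) ∧
        heightAlg Fq (toL Fq ζ) ≤
          C₄ * kabs Fq (polyToK Fq (qSeq Fq a (n + 1) * qSeq Fq a (n + m + 1)))) := by

  have hb2 := nrm_ge_two hb
  have hc2 := nrm_ge_two hc
  have hd2 := nrm_ge_two hd
  have hdb : d - b ≠ 0 := sub_ne_zero.2 hbd.symm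
  have hdb1 := nrm_pos hdb
  refine ⟨(nrm c)⁻¹, nrm b, (nrm c * nrm d * nrm (d - b))⁻¹, 1, by positivity, by positivity,
    by positivity, one_pos, ?_, ?_⟩
  · intro n hn a ha0 _ han hab ξ hξ
    have hb1 : a (n + 1) = b := hab _ (by lia)
    have h := core (b := b) (e := 1) ha0 hξ hn (m := 1) le_rfl
      (fun i hi => by rw [hab i hi, hab (i + 1) (by lia)]) (fun i hi hi' => by lia)
      (by rw [han, hb1]; exact hbc.symm) one_ne_zero (fun g h1 _ => by simpa [fSeq] using h1)
    have hq : nrm (qSeq Fq a (n + 1 + 1)) = nrm b * nrm (qSeq Fq a (n + 1)) := by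
      rw [qSeq_eq hξ.1 n, hb1]
    rw [han, hb1, hq, nrm_one, mul_one] at h
    obtain ⟨h1, h2, h3⟩ := h
    refine ⟨h1, ?_, ?_⟩
    · refine le_trans (le_of_eq ?_) h2
      rw [nrm_def]; field_simp
    · refine h3.trans (le_of_eq ?_)
      rw [nrm_def]; ring
  · intro n hn m hm a ha0 _ han hab ζ hζ
    have hd1 : a (n + m) = d := by rw [hab _ (by lia)]; simp
    have h := core (b := b) (e := d - b) ha0 hζ hn (m := m) (by lia)
      (fun i hi => by
        rw [hab i hi, hab (i + m) (by lia), show i + m - n = i - n + m by lia, Nat.add_mod_right])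
      (fun i hi hi' => by
        rw [hab i hi, if_neg]
        rw [Nat.mod_eq_of_lt (by lia)]; lia)
      (by rw [han, hd1]; exact hcd) hdb
      (fun g h1 h2 => by
        rw [hd1] at h2
        have h3 : g ∣ (d - b) * fSeq b (m - 1) := (dvd_add_right h1).1 h2
        have hco := fSeq_coprime b (m - 1)
        rw [show m - 1 + 1 = m by lia] at hco
        exact (hco.of_isCoprime_of_dvd_left h1).dvd_of_dvd_mul_right h3)
    rw [han, hd1] at h
    rw [nrm_def, nrm_mul, one_mul]
    exact h

end Ooto
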